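/- Let a, f ∈ R := MvPolynomial ℂ (Fin 2) with constant coefficient of a nonzero (a(0,0) ≠ 0). Then in A := MvPowerSeries ℂ (Fin 2) one has the equalities of ideals Ideal.span {ι(a·f), ι(i_{a·f})} = Ideal.span {ι(f), ι(i_f)} and Ideal.span {ι(a·f), ι(v_{a·f})} = Ideal.span {ι(f), ι(v_f)}, where ι : R → A is the canonical map. In particular m₀(a·f, i_{a·f}) = m₀(f, i_f) and m₀(a·f, v_{a·f}) = m₀(f, v_f). -/

import Mathlib

open MvPolynomial

noncomputable section

/-- Partial derivative with respect to the first variable `X`. -/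
def dx (f : MvPolynomial (Fin 2) ℂ) : MvPolynomial (Fin 2) ℂ := pderiv 0 f

/-- Partial derivative with respect to the second variable `Y`. -/
def dy (f : MvPolynomial (Fin 2) ℂ) : MvPolynomial (Fin 2) ℂ := pderiv 1 f

/-- The inflection polynomial `i_f = f_y²·f_xx − 2·f_x·f_y·f_xy + f_x²·f_yy`. -/
def infl (f : MvPolynomial (Fin 2) ℂ) : MvPolynomial (Fin 2) ℂ :=
  (dy f) ^ 2 * dx (dx f) - 2 * dx f * dy f * dy (dx f) + (dx f) ^ 2 * dy (dy f)

/-- The vertex polynomial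
`v_f = (f_x² + f_y²)(f_x³ f_yyy − 3 f_x² f_y f_xyy + 3 f_x f_y² f_xxy − f_y³ f_xxx)
      − 3((f_x² − f_y²) f_xy − f_x f_y (f_xx − f_yy)) · i_f`. -/
def vert (f : MvPolynomial (Fin 2) ℂ) : MvPolynomial (Fin 2) ℂ :=
  ((dx f) ^ 2 + (dy f) ^ 2) *
      ((dx f) ^ 3 * dy (dy (dy f)) - 3 * (dx f) ^ 2 * dy f * dy (dy (dx f)) +
        3 * dx f * (dy f) ^ 2 * dy (dx (dx f)) - (dy f) ^ 3 * dx (dx (dx f))) -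
    3 * (((dx f) ^ 2 - (dy f) ^ 2) * dy (dx f) - dx f * dy f * (dx (dx f) - dy (dy f))) *
      infl f

/-- The canonical map from polynomials to formal power series in two variables. -/
def ι : MvPolynomial (Fin 2) ℂ →+* MvPowerSeries (Fin 2) ℂ :=
  MvPolynomial.coeToMvPowerSeries.ringHom

/-- The local intersection number at the origin of the curves `g = 0` and `h = 0`:
the `ℂ`-dimension of `ℂ⟦x,y⟧/⟨g,h⟩`. -/
def interMult (g h : MvPolynomial (Fin 2) ℂ) : ℕ :=
  Module.finrank ℂ (MvPowerSeries (Fin 2) ℂ ⧸ Ideal.span {ι g, ι h})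

end

/-!
Let `D_f = f_x ∂_y - f_y ∂_x` be the Hamiltonian vector field of `f`, which is tangent to the curve
`f = 0`. With `p = f_x`, `q = f_y` and `s = p² + q²`, the polynomials `i_f` and `v_f` are the
numerators of the curvature `i_f / s ^ (3 / 2)` and of its derivative along `D_f`:
`i_f = p D_f q - q D_f p` and `v_f = s D_f i_f - (3 / 2) i_f D_f s`.

Modulo `f`, replacing `f` by `a f` multiplies `p`, `q` and `D_f` by `a`, and since `D_f f = 0` the
derivation `D_f` respects congruence modulo `f`. Hence `i_f` is multiplied by `a ^ 3`, while in
`v_f` the terms containing `D_f a` cancel and the factor is `a ^ 6`. A nonzero constant term makes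
`a` a unit among the power series, so the ideals do not change.
-/

section DerivationPair

variable {k A : Type*} [CommRing k] [CommRing A] [Algebra k A] (D₁ D₂ : Derivation k A A)

/-- The Hamiltonian vector field `f_x ∂_y - f_y ∂_x` of `f`, for derivations `D₁ = ∂_x` and
`D₂ = ∂_y` of an arbitrary commutative ring; it is the derivative along the level curves of `f`. -/
def hamiltonian (f : A) : Derivation k A A :=
  D₁ f • D₂ - D₂ f • D₁

/-- The inflection polynomial `i_f` in a ring with two derivations, written as the Wronskian of
`f_x` and `f_y` along the Hamiltonian vector field of `f`. -/
def inflection (f : A) : A :=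
  D₁ f * hamiltonian D₁ D₂ f (D₂ f) - D₂ f * hamiltonian D₁ D₂ f (D₁ f)

/-- The vertex polynomial `v_f` in a ring with two derivations: the numerator of the derivative of
the curvature `i_f / (f_x² + f_y²) ^ (3 / 2)` along the Hamiltonian vector field `D_f`. The factor
`f_x D_f f_x + f_y D_f f_y` stands for `D_f (f_x² + f_y²) / 2`, so that `2` need not be
invertible. -/
def vertex (f : A) : A :=
  (D₁ f ^ 2 + D₂ f ^ 2) * hamiltonian D₁ D₂ f (inflection D₁ D₂ f) -
    3 * (D₁ f * hamiltonian D₁ D₂ f (D₁ f) + D₂ f * hamiltonian D₁ D₂ f (D₂ f)) *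
      inflection D₁ D₂ f

theorem hamiltonian_apply (f g : A) : hamiltonian D₁ D₂ f g = D₁ f * D₂ g - D₂ f * D₁ g :=
  rfl

theorem hamiltonian_self (f : A) : hamiltonian D₁ D₂ f f = 0 := by
  rw [hamiltonian_apply, mul_comm, sub_self]

theorem hamiltonian_mul (a f : A) :
    hamiltonian D₁ D₂ (a * f) = a • hamiltonian D₁ D₂ f + f • hamiltonian D₁ D₂ a := by
  ext g
  simp only [hamiltonian_apply, Derivation.leibniz, Derivation.add_apply, Derivation.smul_apply,
    smul_eq_mul]
  ring

variable {D₁ D₂}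

theorem hamiltonian_inflection (comm : ∀ g, D₁ (D₂ g) = D₂ (D₁ g)) (f : A) :
    hamiltonian D₁ D₂ f (inflection D₁ D₂ f) =
      D₁ f ^ 3 * D₂ (D₂ (D₂ f)) - 3 * D₁ f ^ 2 * D₂ f * D₂ (D₂ (D₁ f)) +
        3 * D₁ f * D₂ f ^ 2 * D₂ (D₁ (D₁ f)) - D₂ f ^ 3 * D₁ (D₁ (D₁ f)) := by
  simp only [inflection, hamiltonian_apply, map_sub, Derivation.leibniz, smul_eq_mul, comm]
  -- The terms without third derivatives add up to `D_f f_x * D_f f_y - D_f f_y * D_f f_x = 0`.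
  ring

theorem derivation_smodEq_of_apply_eq_zero {D : Derivation k A A} {f x y : A} (hf : D f = 0)
    (h : x ≡ y [SMOD Ideal.span {f}]) : D x ≡ D y [SMOD Ideal.span {f}] := by
  rw [SModEq.sub_mem, Ideal.mem_span_singleton] at h ⊢
  obtain ⟨c, hc⟩ := h
  exact ⟨D c, by rw [← map_sub, hc, D.leibniz, hf, smul_zero, add_zero, smul_eq_mul]⟩

theorem derivation_mul_smodEq (D : Derivation k A A) (a f : A) :
    D (a * f) ≡ a * D f [SMOD Ideal.span {f}] := by
  rw [SModEq.sub_mem, Ideal.mem_span_singleton]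
  exact ⟨D a, by rw [D.leibniz, smul_eq_mul, smul_eq_mul, add_sub_cancel_left]⟩

theorem hamiltonian_mul_smodEq (a : A) {f x y : A} (h : x ≡ y [SMOD Ideal.span {f}]) :
    hamiltonian D₁ D₂ (a * f) x ≡ a * hamiltonian D₁ D₂ f y [SMOD Ideal.span {f}] := by
  have field_congr : hamiltonian D₁ D₂ (a * f) x ≡ a * hamiltonian D₁ D₂ f x
      [SMOD Ideal.span {f}] := by
    rw [SModEq.sub_mem, Ideal.mem_span_singleton, hamiltonian_mul]
    exact ⟨hamiltonian D₁ D₂ a x, add_sub_cancel_left _ _⟩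
  exact field_congr.trans
    (SModEq.rfl.mul (derivation_smodEq_of_apply_eq_zero (hamiltonian_self D₁ D₂ f) h))

variable (D₁ D₂)

theorem inflection_mul_smodEq (a f : A) :
    inflection D₁ D₂ (a * f) ≡ a ^ 3 * inflection D₁ D₂ f [SMOD Ideal.span {f}] := by
  have h₁ := derivation_mul_smodEq D₁ a f
  have h₂ := derivation_mul_smodEq D₂ a f
  let D := hamiltonian D₁ D₂ f
  calc
    inflection D₁ D₂ (a * f)
      ≡ a * D₁ f * (a * D (a * D₂ f)) - a * D₂ f * (a * D (a * D₁ f)) [SMOD Ideal.span {f}] :=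
        (h₁.mul (hamiltonian_mul_smodEq a h₂)).sub (h₂.mul (hamiltonian_mul_smodEq a h₁))
    _ = a ^ 3 * inflection D₁ D₂ f := by
        simp only [inflection, D, Derivation.leibniz, smul_eq_mul]
        ring

theorem vertex_mul_smodEq (a f : A) :
    vertex D₁ D₂ (a * f) ≡ a ^ 6 * vertex D₁ D₂ f [SMOD Ideal.span {f}] := by
  have h₁ := derivation_mul_smodEq D₁ a f
  have h₂ := derivation_mul_smodEq D₂ a f
  have hi := inflection_mul_smodEq D₁ D₂ a f
  let D := hamiltonian D₁ D₂ f
  let i := inflection D₁ D₂ f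
  calc
    vertex D₁ D₂ (a * f)
      ≡ ((a * D₁ f) ^ 2 + (a * D₂ f) ^ 2) * (a * D (a ^ 3 * i)) -
          3 * (a * D₁ f * (a * D (a * D₁ f)) + a * D₂ f * (a * D (a * D₂ f))) * (a ^ 3 * i)
          [SMOD Ideal.span {f}] :=
        (((h₁.pow 2).add (h₂.pow 2)).mul (hamiltonian_mul_smodEq a hi)).sub
          ((SModEq.rfl.mul ((h₁.mul (hamiltonian_mul_smodEq a h₁)).add
            (h₂.mul (hamiltonian_mul_smodEq a h₂)))).mul hi)
    _ = a ^ 6 * vertex D₁ D₂ f := by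
        simp only [vertex, D, i, Derivation.leibniz, Derivation.leibniz_pow, smul_eq_mul,
          nsmul_eq_mul]
        ring

end DerivationPair

theorem span_pair_unit_mul_eq {B : Type*} [CommRing B] {u w f g h : B} (hu : IsUnit u)
    (hw : IsUnit w) (hg : f ∣ g - w * h) : Ideal.span {u * f, g} = Ideal.span {f, h} := by
  obtain ⟨c, hc⟩ := hg
  calc
    Ideal.span {u * f, g} = Ideal.span {f, g} := by
      rw [Ideal.span_insert, Ideal.span_singleton_mul_left_unit hu, ← Ideal.span_insert]
    _ = Ideal.span {f, w * h} := by
      rw [sub_eq_iff_eq_add.mp hc, Ideal.span_pair_left_mul_add]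
    _ = Ideal.span {f, h} := by
      rw [Ideal.span_insert, Ideal.span_singleton_mul_left_unit hw, ← Ideal.span_insert]

theorem span_pair_map_mul_eq {A B : Type*} [CommRing A] [CommRing B] (φ : A →+* B)
    {a f g h : A} {n : ℕ} (ha : IsUnit (φ a)) (hg : g ≡ a ^ n * h [SMOD Ideal.span {f}]) :
    Ideal.span {φ (a * f), φ g} = Ideal.span {φ f, φ h} := by
  rw [SModEq.sub_mem, Ideal.mem_span_singleton] at hg
  rw [map_mul]
  have map_congr : φ f ∣ φ g - φ a ^ n * φ h := by
    simpa only [map_sub, map_mul, map_pow] using map_dvd φ hg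
  exact span_pair_unit_mul_eq ha (ha.pow n) map_congr

theorem pderiv_comm {σ R : Type*} [CommSemiring R] (i j : σ) (f : MvPolynomial σ R) :
    pderiv i (pderiv j f) = pderiv j (pderiv i f) := by
  classical
  induction f using MvPolynomial.induction_on with
  | C r => simp only [pderiv_C, map_zero]
  | add p q hp hq => simp only [map_add, hp, hq]
  | mul_X p l hp =>
    have pderiv_pderiv_X (m n : σ) : pderiv m (pderiv n (X l : MvPolynomial σ R)) = 0 := by
      rw [pderiv_X, Pi.single_apply]
      split_ifs
      · exact pderiv_one
      · exact map_zero _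
    simp only [pderiv_mul, map_add, pderiv_pderiv_X, hp]
    ring

theorem infl_eq_inflection (f : MvPolynomial (Fin 2) ℂ) :
    infl f = inflection (pderiv 0) (pderiv 1) f := by
  simp only [infl, dx, dy, inflection, hamiltonian_apply, pderiv_comm 0 1 f]
  ring

theorem vert_eq_vertex (f : MvPolynomial (Fin 2) ℂ) :
    vert f = vertex (pderiv 0) (pderiv 1) f := by
  rw [vertex, hamiltonian_inflection (pderiv_comm 0 1), vert, infl_eq_inflection]
  simp only [dx, dy, hamiltonian_apply, pderiv_comm 0 1 f]
  ring

theorem isUnit_ι {a : MvPolynomial (Fin 2) ℂ} (ha : coeff 0 a ≠ 0) : IsUnit (ι a) := by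
  rw [MvPowerSeries.isUnit_iff_constantCoeff, isUnit_iff_ne_zero,
    ← MvPowerSeries.coeff_zero_eq_constantCoeff_apply]
  exact ha

theorem interMult_congr {g₁ h₁ g₂ h₂ : MvPolynomial (Fin 2) ℂ}
    (e : Ideal.span {ι g₁, ι h₁} = Ideal.span {ι g₂, ι h₂}) :
    interMult g₁ h₁ = interMult g₂ h₂ := by
  rw [interMult, e, interMult]

theorem inflection_vertex_ideal_unit_invariant_general {k A B : Type*} [CommRing k]
    [CommRing A] [Algebra k A] [CommRing B] (D₁ D₂ : Derivation k A A) (φ : A →+* B) (a f : A)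
    (ha : IsUnit (φ a)) :
    Ideal.span {φ (a * f), φ (inflection D₁ D₂ (a * f))} =
      Ideal.span {φ f, φ (inflection D₁ D₂ f)} ∧
    Ideal.span {φ (a * f), φ (vertex D₁ D₂ (a * f))} =
      Ideal.span {φ f, φ (vertex D₁ D₂ f)} :=
  ⟨span_pair_map_mul_eq φ ha (inflection_mul_smodEq D₁ D₂ a f),
    span_pair_map_mul_eq φ ha (vertex_mul_smodEq D₁ D₂ a f)⟩

/-- **Theorem 3.2(4).** The invariants `I_f` and `V_f` do not depend on the choice of
defining equation for the curve: multiplying `f` by a unit `a` (a polynomial with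
nonzero constant term) changes neither the ideal `⟨f, i_f⟩` nor `⟨f, v_f⟩` in
`ℂ⟦x,y⟧`, and hence neither `I_f = m₀(f, i_f)` nor `V_f = m₀(f, v_f)`. -/
theorem inflection_vertex_ideal_unit_invariant
    (a f : MvPolynomial (Fin 2) ℂ) (ha : MvPolynomial.coeff 0 a ≠ 0) :
    Ideal.span {ι (a * f), ι (infl (a * f))} = Ideal.span {ι f, ι (infl f)} ∧
    Ideal.span {ι (a * f), ι (vert (a * f))} = Ideal.span {ι f, ι (vert f)} ∧
    interMult (a * f) (infl (a * f)) = interMult f (infl f) ∧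
    interMult (a * f) (vert (a * f)) = interMult f (vert f) := by
  obtain ⟨hi, hv⟩ :=
    inflection_vertex_ideal_unit_invariant_general (pderiv 0) (pderiv 1) ι a f (isUnit_ι ha)
  simp only [← infl_eq_inflection, ← vert_eq_vertex] at hi hv
  exact ⟨hi, hv, interMult_congr hi, interMult_congr hv⟩
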